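/- Let 0 < α < 1. There exists a constant C_α > 0 with the following property: for every complex Hilbert space H, every family (P_n)_{n ∈ ℤ} of mutually orthogonal orthogonal projections on H (P_n* = P_n = P_n², P_m P_n = 0 for m ≠ n) such that ∑_{n ∈ ℤ} P_n x converges to x for every x ∈ H, and all bounded operators a and b on H satisfying P_m ∘ b ∘ P_n = (m − n) · (P_m ∘ a ∘ P_n) for all m, n ∈ ℤ (i.e. b is the commutator [T, a] where T = ∑_n n P_n), there exists a bounded operator c on H with P_m ∘ c ∘ P_n = (|m|^α − |n|^α) · (P_m ∘ a ∘ P_n) for all m, n ∈ ℤ (i.e. c = [|T|^α, a]) and ‖c‖ ≤ C_α · ‖b‖. -/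

import Mathlib

universe u

/-!
Write `c = M ∘ b`, where `M` multiplies the block `(m, n)` by the divided difference
`(|m|^α - |n|^α) / (m - n)`. If `M(m, n) = ⟪u m, v n⟫` for bounded families `u`, `v` in an inner
product space `E`, then with `U x = ∑ u n ⊗ P n x` and `V x = ∑ v n ⊗ P n x` the operator
`U† (1 ⊗ b) V` has the required blocks and norm at most `sup ‖u‖ * sup ‖v‖ * ‖b‖`.

Such a factorization comes from `|x|^α = C * ∫ t in (0, ∞), t^(α/2 - 1) * x² / (t + x²)` and
`x² / (t + x²) - y² / (t + y²) = t * (x - y) * (x + y) / ((t + x²) * (t + y²))`: after division by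
`x - y` the integrand is a sum of two products of a function of `(x, t)` and a function of `(y, t)`.
Distributing the powers of `t` suitably, both factors have squared `L²(dt)`-norm of order
`|x|^(α - 1)`, which is bounded on `|x| ≥ δ`. The row and the column at `x = 0` are rank one
multipliers and are treated separately.
-/

section OperatorTheory

open Filter InnerProductSpace UniformSpace
open scoped TensorProduct

variable {𝕜 ι E G H : Type*} [RCLike 𝕜]
  [NormedAddCommGroup E] [InnerProductSpace 𝕜 E]
  [NormedAddCommGroup G] [InnerProductSpace 𝕜 G]
  [NormedAddCommGroup H] [InnerProductSpace 𝕜 H]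

lemma norm_completion_le (f : E →L[𝕜] G) : ‖f.completion‖ ≤ ‖f‖ := by
  refine f.completion.opNorm_le_bound (norm_nonneg f) fun z => ?_
  induction z using Completion.induction_on with
  | hp => exact isClosed_le (by fun_prop) (by fun_prop)
  | ih x => simpa only [ContinuousLinearMap.completion_apply_coe, Completion.norm_coe]
      using f.le_opNorm x

lemma exists_hasSum_apply_of_orthogonal [CompleteSpace G] {T : ι → H →L[𝕜] G} {K : ℝ}
    (hT : Pairwise fun i j => ∀ x y, ⟪T i x, T j y⟫_𝕜 = 0) (hK : 0 ≤ K)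
    (hTK : ∀ (s : Finset ι) x, ∑ i ∈ s, ‖T i x‖ ^ 2 ≤ (K * ‖x‖) ^ 2) :
    ∃ V : H →L[𝕜] G, (∀ x, HasSum (fun i => T i x) (V x)) ∧ ‖V‖ ≤ K := by
  have hV : OrthogonalFamily 𝕜 (fun i => (T i).range) fun i => (T i).range.subtypeₗᵢ := by
    rintro i j hij ⟨_, x, rfl⟩ ⟨_, y, rfl⟩
    exact hT hij x y
  have hsummable (x : H) : Summable fun i => T i x :=
    (hV.summable_iff_norm_sq_summable fun i => ⟨T i x, x, rfl⟩).2 <|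
      summable_of_sum_le (fun _ => sq_nonneg _) fun s => hTK s x
  have hnorm (s : Finset ι) (x : H) : ‖∑ i ∈ s, T i x‖ ≤ K * ‖x‖ := by
    refine le_of_sq_le_sq (le_of_eq_of_le ?_ (hTK s x)) (by positivity)
    exact hV.norm_sum (fun i => ⟨T i x, x, rfl⟩) s
  let V : H →ₗ[𝕜] G := linearMapOfTendsto (fun x => ∑' i, T i x)
    (fun s : Finset ι => ∑ i ∈ s, (T i : H →ₗ[𝕜] G)) <| tendsto_pi_nhds.2 fun x => by
      simpa only [HasSum, LinearMap.coe_sum, Finset.sum_apply, ContinuousLinearMap.coe_coe]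
        using (hsummable x).hasSum
  exact ⟨V.mkContinuous K fun x => le_of_tendsto (hsummable x).hasSum.norm
    (Eventually.of_forall fun s => hnorm s x), fun x => (hsummable x).hasSum,
    V.mkContinuous_norm_le hK _⟩

/-- A family of mutually orthogonal self-adjoint projections. -/
structure OrthogonalProjections [CompleteSpace H] (P : ι → H →L[𝕜] H) : Prop
    extends OrthogonalIdempotents P where
  isSelfAdjoint : ∀ i, IsSelfAdjoint (P i)

/-- `M` is a Schur multiplier of norm at most `K` for the block decomposition given by `P`:
multiplying the blocks `P i b P j` of a bounded operator `b` by `M i j` gives the blocks of a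
bounded operator of norm at most `K * ‖b‖`. -/
def IsSchurMultiplierWith (P : ι → H →L[𝕜] H) (K : ℝ) (M : ι → ι → 𝕜) : Prop :=
  ∀ b : H →L[𝕜] H, ∃ c : H →L[𝕜] H,
    (∀ i j, P i ∘L c ∘L P j = M i j • (P i ∘L b ∘L P j)) ∧ ‖c‖ ≤ K * ‖b‖

lemma IsSchurMultiplierWith.add {P : ι → H →L[𝕜] H} {K L : ℝ} {M N : ι → ι → 𝕜}
    (hM : IsSchurMultiplierWith P K M) (hN : IsSchurMultiplierWith P L N) :
    IsSchurMultiplierWith P (K + L) (M + N) := by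
  intro b
  obtain ⟨c, hc, hcK⟩ := hM b
  obtain ⟨d, hd, hdL⟩ := hN b
  refine ⟨c + d, fun i j => ?_, ?_⟩
  · simp only [ContinuousLinearMap.add_comp, ContinuousLinearMap.comp_add, hc, hd, Pi.add_apply,
      add_smul]
  · linarith [norm_add_le c d]

lemma IsSchurMultiplierWith.smul {P : ι → H →L[𝕜] H} {K : ℝ} {M : ι → ι → 𝕜}
    (hM : IsSchurMultiplierWith P K M) (r : 𝕜) :
    IsSchurMultiplierWith P (‖r‖ * K) (r • M) := by
  intro b
  obtain ⟨c, hc, hcK⟩ := hM b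
  refine ⟨r • c, fun i j => ?_, ?_⟩
  · simp only [ContinuousLinearMap.smul_comp, ContinuousLinearMap.comp_smul, hc, Pi.smul_apply,
      smul_eq_mul, smul_smul]
  · rw [norm_smul, mul_assoc]
    gcongr

namespace OrthogonalProjections

variable [CompleteSpace H] {P : ι → H →L[𝕜] H}

lemma apply_apply_self (hP : OrthogonalProjections P) (i : ι) (x : H) : P i (P i x) = P i x :=
  congr($(hP.idem i) x)

lemma apply_apply_of_ne (hP : OrthogonalProjections P) {i j : ι} (hij : i ≠ j) (x : H) :
    P i (P j x) = 0 :=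
  congr($(hP.ortho hij) x)

lemma inner_apply_left (hP : OrthogonalProjections P) (i : ι) (x y : H) :
    ⟪P i x, y⟫_𝕜 = ⟪x, P i y⟫_𝕜 :=
  (hP.isSelfAdjoint i).isSymmetric x y

lemma inner_apply_apply_of_ne (hP : OrthogonalProjections P) {i j : ι} (hij : i ≠ j) (x y : H) :
    ⟪P i x, P j y⟫_𝕜 = 0 := by
  rw [hP.inner_apply_left, hP.apply_apply_of_ne hij, inner_zero_right]

lemma sum_norm_sq_le (hP : OrthogonalProjections P) (s : Finset ι) (x : H) :
    ∑ i ∈ s, ‖P i x‖ ^ 2 ≤ ‖x‖ ^ 2 := by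
  have hQ : IsStarProjection (∑ i ∈ s, P i) :=
    ⟨hP.isIdempotentElem_sum, isSelfAdjoint_sum s fun i _ => hP.isSelfAdjoint i⟩
  have hV : OrthogonalFamily 𝕜 (fun i => (P i).range) fun i => (P i).range.subtypeₗᵢ := by
    rintro i j hij ⟨_, x, rfl⟩ ⟨_, y, rfl⟩
    exact hP.inner_apply_apply_of_ne hij x y
  calc ∑ i ∈ s, ‖P i x‖ ^ 2 = ‖(∑ i ∈ s, P i) x‖ ^ 2 := by
        rw [sum_apply]
        exact (hV.norm_sum (fun i => ⟨P i x, x, rfl⟩) s).symm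
    _ ≤ ‖x‖ ^ 2 := by
        gcongr
        exact ContinuousLinearMap.le_of_opNorm_le _ hQ.norm_le x |>.trans_eq (one_mul _)

lemma exists_apply_eq_tmul (hP : OrthogonalProjections P) {v : ι → E} {K : ℝ} (hK : 0 ≤ K)
    (hv : ∀ i, ‖v i‖ ≤ K) :
    ∃ V : H →L[𝕜] Completion (E ⊗[𝕜] H),
      (∀ i x, V (P i x) = ↑(v i ⊗ₜ[𝕜] P i x)) ∧ ‖V‖ ≤ K := by
  let T (i : ι) : H →L[𝕜] Completion (E ⊗[𝕜] H) :=
    Completion.toComplL ∘L TensorProduct.mkL 𝕜 E H (v i) ∘L P i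
  have hT (i : ι) (x : H) : T i x = ↑(v i ⊗ₜ[𝕜] P i x) := rfl
  obtain ⟨V, hV, hVK⟩ := exists_hasSum_apply_of_orthogonal (T := T) (K := K)
    (fun i j hij x y => by
      rw [hT, hT, Completion.inner_coe, TensorProduct.inner_tmul,
        hP.inner_apply_apply_of_ne hij, mul_zero])
    hK fun s x => calc
      ∑ i ∈ s, ‖T i x‖ ^ 2 = ∑ i ∈ s, ‖v i‖ ^ 2 * ‖P i x‖ ^ 2 := by
        simp only [hT, Completion.norm_coe, TensorProduct.norm_tmul, mul_pow]
      _ ≤ ∑ i ∈ s, K ^ 2 * ‖P i x‖ ^ 2 := by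
        gcongr with i
        exact hv i
      _ ≤ (K * ‖x‖) ^ 2 := by
        rw [← Finset.mul_sum, mul_pow]
        gcongr
        exact hP.sum_norm_sq_le s x
  refine ⟨V, fun i x => (hV (P i x)).unique ?_, hVK⟩
  convert hasSum_single i fun j hj => ?_ using 1
  · rw [hT, hP.apply_apply_self]
  · rw [hT, hP.apply_apply_of_ne hj, TensorProduct.tmul_zero, Completion.coe_zero]

theorem isSchurMultiplierWith_inner (hP : OrthogonalProjections P) {u v : ι → E} {K L : ℝ}
    (hK : 0 ≤ K) (hL : 0 ≤ L) (hu : ∀ i, ‖u i‖ ≤ K) (hv : ∀ i, ‖v i‖ ≤ L) :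
    IsSchurMultiplierWith P (K * L) fun i j => ⟪u i, v j⟫_𝕜 := by
  intro b
  obtain ⟨U, hU, hUK⟩ := hP.exists_apply_eq_tmul hK hu
  obtain ⟨V, hV, hVL⟩ := hP.exists_apply_eq_tmul hL hv
  let B : Completion (E ⊗[𝕜] H) →L[𝕜] Completion (E ⊗[𝕜] H) :=
    (TensorProduct.mapL (.id 𝕜 E) b).completion
  have hB : ‖B‖ ≤ ‖b‖ := calc
    ‖B‖ ≤ ‖ContinuousLinearMap.id 𝕜 E‖ * ‖b‖ :=
      (norm_completion_le _).trans (TensorProduct.norm_mapL_le _ _)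
    _ ≤ ‖b‖ := mul_le_of_le_one_left (norm_nonneg b) ContinuousLinearMap.norm_id_le
  refine ⟨ContinuousLinearMap.adjoint U ∘L B ∘L V, fun i j => ?_, ?_⟩
  · ext y
    refine ext_inner_left 𝕜 fun x => ?_
    calc ⟪x, P i (ContinuousLinearMap.adjoint U (B (V (P j y))))⟫_𝕜
        = ⟪U (P i x), B (V (P j y))⟫_𝕜 := by
          rw [← hP.inner_apply_left, ContinuousLinearMap.adjoint_inner_right]
      _ = ⟪u i, v j⟫_𝕜 * ⟪P i x, b (P j y)⟫_𝕜 := by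
          rw [hU, hV, ContinuousLinearMap.completion_apply_coe, Completion.inner_coe,
            TensorProduct.mapL_tmul, TensorProduct.inner_tmul, ContinuousLinearMap.id_apply]
      _ = ⟪x, ⟪u i, v j⟫_𝕜 • P i (b (P j y))⟫_𝕜 := by
          rw [inner_smul_right, hP.inner_apply_left]
  · calc ‖ContinuousLinearMap.adjoint U ∘L B ∘L V‖
        ≤ ‖ContinuousLinearMap.adjoint U‖ * (‖B‖ * ‖V‖) :=
          (ContinuousLinearMap.opNorm_comp_le _ _).trans <| by
            gcongr
            exact ContinuousLinearMap.opNorm_comp_le _ _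
      _ ≤ K * (‖b‖ * L) := by
          rw [LinearIsometryEquiv.norm_map]
          gcongr
      _ = K * L * ‖b‖ := by ring

theorem isSchurMultiplierWith_mul (hP : OrthogonalProjections P) {p q : ι → ℝ} {K L : ℝ}
    (hK : 0 ≤ K) (hL : 0 ≤ L) (hp : ∀ i, |p i| ≤ K) (hq : ∀ i, |q i| ≤ L) :
    IsSchurMultiplierWith P (K * L) fun i j => ((p i * q j : ℝ) : 𝕜) := by
  simpa [mul_comm] using hP.isSchurMultiplierWith_inner (u := fun i => (p i : 𝕜))
    (v := fun i => (q i : 𝕜)) hK hL (by simpa using hp) (by simpa using hq)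

end OrthogonalProjections

end OperatorTheory

section L2

open MeasureTheory InnerProductSpace Real

variable {𝕜 ι H X : Type*} [RCLike 𝕜] [NormedAddCommGroup H] [InnerProductSpace 𝕜 H]
  [CompleteSpace H] {P : ι → H →L[𝕜] H} [MeasurableSpace X] {μ : Measure X}

lemma inner_toLp_ofReal {f g : X → ℝ} (hf : MemLp f 2 μ) (hg : MemLp g 2 μ) :
    ⟪(hf.ofReal (K := 𝕜)).toLp, (hg.ofReal (K := 𝕜)).toLp⟫_𝕜 = ((∫ t, f t * g t ∂μ : ℝ) : 𝕜) := by
  rw [L2.inner_def, ← integral_ofReal]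
  refine integral_congr_ae ?_
  filter_upwards [(hf.ofReal (K := 𝕜)).coeFn_toLp, (hg.ofReal (K := 𝕜)).coeFn_toLp] with t hft hgt
  rw [hft, hgt, RCLike.inner_apply, RCLike.conj_ofReal, RCLike.ofReal_mul, mul_comm]

lemma norm_toLp_ofReal_le {f : X → ℝ} {K : ℝ} (hf : MemLp f 2 μ) (hfK : ∫ t, f t ^ 2 ∂μ ≤ K) :
    ‖(hf.ofReal (K := 𝕜)).toLp‖ ≤ √K := by
  refine le_sqrt_of_sq_le (le_of_eq_of_le ?_ hfK)
  have h := inner_self_eq_norm_sq_to_K (𝕜 := 𝕜) (hf.ofReal (K := 𝕜)).toLp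
  rw [inner_toLp_ofReal hf hf] at h
  simp only [← sq] at h
  exact_mod_cast h.symm

theorem OrthogonalProjections.isSchurMultiplierWith_integral (hP : OrthogonalProjections P)
    {f g : ι → X → ℝ} {K : ℝ} (hK : 0 ≤ K) (hf : ∀ i, MemLp (f i) 2 μ) (hg : ∀ i, MemLp (g i) 2 μ)
    (hfK : ∀ i, ∫ t, f i t ^ 2 ∂μ ≤ K) (hgK : ∀ i, ∫ t, g i t ^ 2 ∂μ ≤ K) :
    IsSchurMultiplierWith P K fun i j => ((∫ t, f i t * g j t ∂μ : ℝ) : 𝕜) := by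
  have h := hP.isSchurMultiplierWith_inner (sqrt_nonneg K) (sqrt_nonneg K)
    (fun i => norm_toLp_ofReal_le (𝕜 := 𝕜) (hf i) (hfK i))
    (fun i => norm_toLp_ofReal_le (𝕜 := 𝕜) (hg i) (hgK i))
  rw [mul_self_sqrt hK] at h
  convert h using 3 with i j
  exact (inner_toLp_ofReal (hf i) (hg j)).symm

end L2

section Kernel

open MeasureTheory Set Real

/-- The `L²(0, ∞)`-factor, odd in `x`, of the divided difference of `|·| ^ α`. The exponent of `t`
makes its squared norm proportional to `|x| ^ (α - 1)`. -/
noncomputable def oddKernel (α x t : ℝ) : ℝ := x * t ^ ((α - 1) / 4) / (t + x ^ 2)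

/-- The `L²(0, ∞)`-factor, even in `x`, of the divided difference of `|·| ^ α`, paired with
`oddKernel`. The value at `x = 0` is set to `0` because `t ^ ((α + 1) / 4) / t` is not square
integrable. -/
noncomputable def evenKernel (α x t : ℝ) : ℝ :=
  if x = 0 then 0 else t ^ ((α + 1) / 4) / (t + x ^ 2)

/-- The constant `C` in `∫ t in (0, ∞), t ^ p * (t⁻¹ - (t + x)⁻¹) = C * x ^ p`. -/
noncomputable def rpowConst (p : ℝ) : ℝ := ∫ t in Ioi 0, rpowIntegrand₀₁ p t 1

variable {α : ℝ}

lemma oddKernel_sq_add_evenKernel_sq (hα : α ∈ Ioo (-1) 1) (x : ℝ) {t : ℝ} (ht : 0 < t) :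
    oddKernel α x t ^ 2 + evenKernel α x t ^ 2 =
      (x ^ 2)⁻¹ * rpowIntegrand₀₁ ((α + 1) / 2) t (x ^ 2) := by
  rcases eq_or_ne x 0 with rfl | hx
  · simp [oddKernel, evenKernel]
  have hodd : (t ^ ((α - 1) / 4)) ^ 2 = t ^ ((α + 1) / 2 - 1) := by
    rw [← rpow_mul_natCast ht.le]
    ring_nf
  have heven : (t ^ ((α + 1) / 4)) ^ 2 = t ^ ((α + 1) / 2 - 1) * t := by
    rw [← rpow_mul_natCast ht.le, ← rpow_add_one ht.ne']
    ring_nf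
  rw [rpowIntegrand₀₁_eq_pow_div ⟨by linarith [hα.1], by linarith [hα.2]⟩ ht.le (sq_nonneg x),
    oddKernel, evenKernel, if_neg hx, div_pow, div_pow, mul_pow, hodd, heven]
  field_simp
  ring

lemma sub_mul_oddKernel_mul_evenKernel_add (hα : α ∈ Ioo 0 2) {x y t : ℝ} (hx : x ≠ 0)
    (hy : y ≠ 0) (ht : 0 < t) :
    (x - y) * (oddKernel α x t * evenKernel α y t + evenKernel α x t * oddKernel α y t) =
      rpowIntegrand₀₁ (α / 2) t (x ^ 2) - rpowIntegrand₀₁ (α / 2) t (y ^ 2) := by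
  have hp : α / 2 ∈ Ioo 0 1 := ⟨by linarith [hα.1], by linarith [hα.2]⟩
  have hmul : t ^ ((α - 1) / 4) * t ^ ((α + 1) / 4) = t ^ (α / 2 - 1) * t := by
    rw [← rpow_add ht, ← rpow_add_one ht.ne']
    ring_nf
  calc (x - y) * (oddKernel α x t * evenKernel α y t + evenKernel α x t * oddKernel α y t)
      = t ^ ((α - 1) / 4) * t ^ ((α + 1) / 4) *
          ((x ^ 2 - y ^ 2) / ((t + x ^ 2) * (t + y ^ 2))) := by
        simp only [oddKernel, evenKernel, if_neg hx, if_neg hy]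
        field_simp
        ring
    _ = rpowIntegrand₀₁ (α / 2) t (x ^ 2) - rpowIntegrand₀₁ (α / 2) t (y ^ 2) := by
        rw [hmul, rpowIntegrand₀₁_eq_pow_div hp ht.le (sq_nonneg x),
          rpowIntegrand₀₁_eq_pow_div hp ht.le (sq_nonneg y)]
        field_simp
        ring

lemma integrableOn_oddKernel_sq_add_evenKernel_sq (hα : α ∈ Ioo (-1) 1) (x : ℝ) :
    IntegrableOn (fun t => oddKernel α x t ^ 2 + evenKernel α x t ^ 2) (Ioi 0) := by
  have hp : (α + 1) / 2 ∈ Ioo 0 1 := ⟨by linarith [hα.1], by linarith [hα.2]⟩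
  refine IntegrableOn.congr_fun (f := fun t => (x ^ 2)⁻¹ * rpowIntegrand₀₁ ((α + 1) / 2) t (x ^ 2))
    ?_ (fun t ht => (oddKernel_sq_add_evenKernel_sq hα x ht).symm) measurableSet_Ioi
  exact (integrableOn_rpowIntegrand₀₁_Ioi hp (sq_nonneg x)).const_mul _

lemma integral_oddKernel_sq_add_evenKernel_sq (hα : α ∈ Ioo (-1) 1) (x : ℝ) :
    ∫ t in Ioi 0, (oddKernel α x t ^ 2 + evenKernel α x t ^ 2) =
      rpowConst ((α + 1) / 2) * |x| ^ (α - 1) := by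
  have hp : (α + 1) / 2 ∈ Ioo 0 1 := ⟨by linarith [hα.1], by linarith [hα.2]⟩
  have hpow : (x ^ 2)⁻¹ * (x ^ 2) ^ ((α + 1) / 2) = |x| ^ (α - 1) := by
    rcases eq_or_ne x 0 with rfl | hx
    · simp [zero_rpow (by linarith [hα.2] : α - 1 ≠ 0)]
    · rw [← sq_abs, ← rpow_natCast_mul (abs_nonneg x), ← rpow_natCast, ← rpow_neg (abs_nonneg x),
        ← rpow_add (abs_pos.2 hx)]
      congr 1
      push_cast
      ring
  rw [setIntegral_congr_fun measurableSet_Ioi fun t ht => oddKernel_sq_add_evenKernel_sq hα x ht,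
    integral_const_mul, integral_rpowIntegrand₀₁_eq_rpow_mul_const hp (sq_nonneg x), ← mul_assoc,
    hpow, mul_comm, rpowConst]

lemma memLp_oddKernel (hα : α ∈ Ioo (-1) 1) (x : ℝ) :
    MemLp (oddKernel α x) 2 (volume.restrict (Ioi 0)) := by
  have hmeas : Measurable (oddKernel α x) := by
    unfold oddKernel
    fun_prop
  refine (memLp_two_iff_integrable_sq hmeas.aestronglyMeasurable).2 <|
    (integrableOn_oddKernel_sq_add_evenKernel_sq hα x).mono' (by fun_prop) <|
      ae_of_all _ fun t => ?_
  rw [norm_of_nonneg (sq_nonneg _)]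
  exact le_add_of_nonneg_right (sq_nonneg _)

lemma memLp_evenKernel (hα : α ∈ Ioo (-1) 1) (x : ℝ) :
    MemLp (evenKernel α x) 2 (volume.restrict (Ioi 0)) := by
  have hmeas : Measurable (evenKernel α x) := by
    unfold evenKernel
    split_ifs <;> fun_prop
  refine (memLp_two_iff_integrable_sq hmeas.aestronglyMeasurable).2 <|
    (integrableOn_oddKernel_sq_add_evenKernel_sq hα x).mono' (by fun_prop) <|
      ae_of_all _ fun t => ?_
  rw [norm_of_nonneg (sq_nonneg _)]
  exact le_add_of_nonneg_left (sq_nonneg _)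

lemma integral_oddKernel_sq_le (hα : α ∈ Ioo (-1) 1) (x : ℝ) :
    ∫ t in Ioi 0, oddKernel α x t ^ 2 ≤ rpowConst ((α + 1) / 2) * |x| ^ (α - 1) := by
  rw [← integral_oddKernel_sq_add_evenKernel_sq hα x]
  exact integral_mono (memLp_oddKernel hα x).integrable_sq
    (integrableOn_oddKernel_sq_add_evenKernel_sq hα x)
    fun t => le_add_of_nonneg_right (sq_nonneg _)

lemma integral_evenKernel_sq_le (hα : α ∈ Ioo (-1) 1) (x : ℝ) :
    ∫ t in Ioi 0, evenKernel α x t ^ 2 ≤ rpowConst ((α + 1) / 2) * |x| ^ (α - 1) := by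
  rw [← integral_oddKernel_sq_add_evenKernel_sq hα x]
  exact integral_mono (memLp_evenKernel hα x).integrable_sq
    (integrableOn_oddKernel_sq_add_evenKernel_sq hα x)
    fun t => le_add_of_nonneg_left (sq_nonneg _)

lemma sub_mul_integral_oddKernel_mul_evenKernel_add (hα : α ∈ Ioo 0 1) {x y : ℝ} (hx : x ≠ 0)
    (hy : y ≠ 0) :
    (x - y) * ((∫ t in Ioi 0, oddKernel α x t * evenKernel α y t) +
        ∫ t in Ioi 0, evenKernel α x t * oddKernel α y t) =
      rpowConst (α / 2) * (|x| ^ α - |y| ^ α) := by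
  have hα' : α ∈ Ioo (-1) 1 := ⟨by linarith [hα.1], hα.2⟩
  have hp : α / 2 ∈ Ioo 0 1 := ⟨by linarith [hα.1], by linarith [hα.2]⟩
  have hint (z : ℝ) : ∫ t in Ioi 0, rpowIntegrand₀₁ (α / 2) t (z ^ 2) =
      rpowConst (α / 2) * |z| ^ α := by
    rw [integral_rpowIntegrand₀₁_eq_rpow_mul_const hp (sq_nonneg z), mul_comm, rpowConst,
      ← sq_abs, ← rpow_natCast_mul (abs_nonneg z)]
    norm_num [mul_div_cancel₀]
  have hoe : IntegrableOn (fun t => oddKernel α x t * evenKernel α y t) (Ioi 0) :=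
    (memLp_oddKernel hα' x).integrable_mul (memLp_evenKernel hα' y)
  have heo : IntegrableOn (fun t => evenKernel α x t * oddKernel α y t) (Ioi 0) :=
    (memLp_evenKernel hα' x).integrable_mul (memLp_oddKernel hα' y)
  rw [← integral_add hoe heo, ← integral_const_mul,
    setIntegral_congr_fun measurableSet_Ioi fun t ht =>
      sub_mul_oddKernel_mul_evenKernel_add ⟨hα.1, by linarith [hα.2]⟩ hx hy ht,
    integral_sub (integrableOn_rpowIntegrand₀₁_Ioi hp (sq_nonneg x))
      (integrableOn_rpowIntegrand₀₁_Ioi hp (sq_nonneg y)), hint, hint, mul_sub]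

lemma rpowConst_pos {p : ℝ} (hp : p ∈ Ioo 0 1) : 0 < rpowConst p :=
  integral_rpowIntegrand₀₁_one_pos hp

end Kernel

section Commutator

open MeasureTheory Set Real

/-- The divided difference `(|x| ^ α - |y| ^ α) / (x - y)` for `x ≠ y`, in the factorized form that
exhibits it as a Schur multiplier. The last two terms are the column `y = 0` and the row `x = 0`,
where the integrals vanish; the quotients by `0` are `0`. -/
noncomputable def absRpowSlope (α x y : ℝ) : ℝ :=
  (rpowConst (α / 2))⁻¹ * ((∫ t in Ioi 0, oddKernel α x t * evenKernel α y t) +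
      ∫ t in Ioi 0, evenKernel α x t * oddKernel α y t) +
    (|x| ^ α / x * ({0} : Set ℝ).indicator 1 y + ({0} : Set ℝ).indicator 1 x * (|y| ^ α / y))

/-- The constant in the commutator estimate for `|T| ^ α` when the nonzero spectrum of `T` has
distance at least `1` from `0`. -/
noncomputable def absRpowCommutatorConst (α : ℝ) : ℝ :=
  2 * rpowConst ((α + 1) / 2) / rpowConst (α / 2) + 2

variable {α : ℝ}

lemma absRpowCommutatorConst_pos (hα : α ∈ Ioo 0 1) : 0 < absRpowCommutatorConst α := by
  have hnum := rpowConst_pos (p := (α + 1) / 2) ⟨by linarith [hα.1], by linarith [hα.2]⟩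
  have hden := rpowConst_pos (p := α / 2) ⟨by linarith [hα.1], by linarith [hα.2]⟩
  unfold absRpowCommutatorConst
  positivity

lemma absRpowSlope_mul_sub (hα : α ∈ Ioo 0 1) (x y : ℝ) :
    absRpowSlope α x y * (x - y) = |x| ^ α - |y| ^ α := by
  have hzero : (0 : ℝ) ^ α = 0 := zero_rpow hα.1.ne'
  rcases eq_or_ne x 0 with rfl | hx <;> rcases eq_or_ne y 0 with rfl | hy
  · simp
  · simp [absRpowSlope, oddKernel, evenKernel, hy, hzero]
  · simp [absRpowSlope, oddKernel, evenKernel, hx, hzero]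
  · have hc := rpowConst_pos (p := α / 2) ⟨by linarith [hα.1], by linarith [hα.2]⟩
    have hsub := sub_mul_integral_oddKernel_mul_evenKernel_add hα hx hy
    simp only [absRpowSlope, indicator_of_notMem (mem_singleton_iff.not.2 hx),
      indicator_of_notMem (mem_singleton_iff.not.2 hy), mul_zero, zero_mul, add_zero]
    rw [mul_assoc, mul_comm _ (x - y), hsub, inv_mul_cancel_left₀ hc.ne']

lemma abs_rpow_sub_one_le (hα : α < 1) {x δ : ℝ} (hδ : 0 < δ) (hx : x ≠ 0 → δ ≤ |x|) :
    |x| ^ (α - 1) ≤ δ ^ (α - 1) := by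
  rcases eq_or_ne x 0 with rfl | hx0
  · rw [abs_zero, zero_rpow (sub_neg.2 hα).ne]
    positivity
  · exact rpow_le_rpow_of_nonpos hδ (hx hx0) (by linarith)

lemma abs_abs_rpow_div_self (hα : α < 1) (x : ℝ) : |(|x| ^ α / x)| = |x| ^ (α - 1) := by
  rcases eq_or_ne x 0 with rfl | hx
  · simp [zero_rpow (sub_neg.2 hα).ne]
  · rw [abs_div, abs_of_nonneg (by positivity), rpow_sub_one (abs_ne_zero.2 hx)]

variable {𝕜 ι H : Type*} [RCLike 𝕜] [NormedAddCommGroup H] [InnerProductSpace 𝕜 H]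
  [CompleteSpace H] {P : ι → H →L[𝕜] H}

theorem OrthogonalProjections.isSchurMultiplierWith_absRpowSlope
    (hP : OrthogonalProjections P) (hα : α ∈ Ioo 0 1) {τ : ι → ℝ} {δ : ℝ} (hδ : 0 < δ)
    (hτ : ∀ i, τ i ≠ 0 → δ ≤ |τ i|) :
    IsSchurMultiplierWith P (absRpowCommutatorConst α * δ ^ (α - 1))
      fun i j => (absRpowSlope α (τ i) (τ j) : 𝕜) := by
  have hα' : α ∈ Ioo (-1) 1 := ⟨by linarith [hα.1], hα.2⟩
  have hnum := rpowConst_pos (p := (α + 1) / 2) ⟨by linarith [hα.1], by linarith [hα.2]⟩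
  have hden := rpowConst_pos (p := α / 2) ⟨by linarith [hα.1], by linarith [hα.2]⟩
  have hpow (i : ι) := abs_rpow_sub_one_le hα.2 hδ (hτ i)
  have hodd (i : ι) := (integral_oddKernel_sq_le hα' (τ i)).trans
    (mul_le_mul_of_nonneg_left (hpow i) hnum.le)
  have heven (i : ι) := (integral_evenKernel_sq_le hα' (τ i)).trans
    (mul_le_mul_of_nonneg_left (hpow i) hnum.le)
  have hquot (i : ι) : |(|τ i| ^ α / τ i)| ≤ δ ^ (α - 1) :=
    (abs_abs_rpow_div_self hα.2 _).trans_le (hpow i)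
  have hind (i : ι) : |({0} : Set ℝ).indicator 1 (τ i)| ≤ (1 : ℝ) := by
    by_cases h : τ i = 0 <;> simp [h]
  have hδα : 0 ≤ δ ^ (α - 1) := by positivity
  have hc : 0 ≤ rpowConst ((α + 1) / 2) * δ ^ (α - 1) := by positivity
  have hoe := hP.isSchurMultiplierWith_integral hc (fun i => memLp_oddKernel hα' (τ i))
    (fun i => memLp_evenKernel hα' (τ i)) hodd heven
  have heo := hP.isSchurMultiplierWith_integral hc (fun i => memLp_evenKernel hα' (τ i))
    (fun i => memLp_oddKernel hα' (τ i)) heven hodd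
  have hqi := hP.isSchurMultiplierWith_mul hδα zero_le_one hquot hind
  have hiq := hP.isSchurMultiplierWith_mul zero_le_one hδα hind hquot
  convert ((hoe.add heo).smul ((rpowConst (α / 2))⁻¹ : ℝ)).add (hqi.add hiq) using 1
  · rw [RCLike.norm_ofReal, abs_of_pos (inv_pos.2 hden), absRpowCommutatorConst]
    ring
  · ext i j
    simp only [absRpowSlope, Pi.add_apply, Pi.smul_apply, smul_eq_mul, RCLike.ofReal_add,
      RCLike.ofReal_mul]

theorem fractional_power_commutator_bound_general (hα : α ∈ Ioo 0 1)
    (hP : OrthogonalProjections P) {τ : ι → ℝ} {δ : ℝ} (hδ : 0 < δ)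
    (hτ : ∀ i, τ i ≠ 0 → δ ≤ |τ i|) {a b : H →L[𝕜] H}
    (hab : ∀ i j, P i ∘L b ∘L P j = ((τ i - τ j : ℝ) : 𝕜) • (P i ∘L a ∘L P j)) :
    ∃ c : H →L[𝕜] H,
      (∀ i j, P i ∘L c ∘L P j = ((|τ i| ^ α - |τ j| ^ α : ℝ) : 𝕜) • (P i ∘L a ∘L P j)) ∧
      ‖c‖ ≤ absRpowCommutatorConst α * δ ^ (α - 1) * ‖b‖ := by
  obtain ⟨c, hc, hcb⟩ := hP.isSchurMultiplierWith_absRpowSlope hα hδ hτ b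
  refine ⟨c, fun i j => ?_, hcb⟩
  rw [hc, hab, smul_smul, ← RCLike.ofReal_mul, absRpowSlope_mul_sub hα]

end Commutator

/-- **Commutator estimate for fractional powers of an operator with integer spectrum.**
For `0 < α < 1` there is a constant `C_α > 0` such that for any family `(P n)_{n ∈ ℤ}` of
mutually orthogonal projections on a complex Hilbert space summing (strongly) to the
identity, and any bounded operators `a, b` with `P m b P n = (m − n) P m a P n`
(i.e. `b = [T, a]` for `T = ∑ n P n`), there is a bounded operator `c` with
`P m c P n = (|m|^α − |n|^α) P m a P n` (i.e. `c = [|T|^α, a]`) and `‖c‖ ≤ C_α ‖b‖`. -/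
theorem fractional_power_commutator_bound (α : ℝ) (hα0 : 0 < α) (hα1 : α < 1) :
    ∃ C : ℝ, 0 < C ∧
      ∀ (H : Type u) [NormedAddCommGroup H] [InnerProductSpace ℂ H] [CompleteSpace H]
        (P : ℤ → H →L[ℂ] H),
        (∀ n, ContinuousLinearMap.adjoint (P n) = P n) →
        (∀ n, P n ∘L P n = P n) →
        (∀ m n, m ≠ n → P m ∘L P n = 0) →
        (∀ x : H, HasSum (fun n => P n x) x) →
        ∀ a b : H →L[ℂ] H,
          (∀ m n : ℤ, P m ∘L b ∘L P n = (((m - n : ℤ) : ℂ)) • (P m ∘L a ∘L P n)) →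
          ∃ c : H →L[ℂ] H,
            (∀ m n : ℤ, P m ∘L c ∘L P n =
              ((((|(m : ℝ)| ^ α - |(n : ℝ)| ^ α : ℝ) : ℂ))) • (P m ∘L a ∘L P n)) ∧
            ‖c‖ ≤ C * ‖b‖ := by
  refine ⟨absRpowCommutatorConst α, absRpowCommutatorConst_pos ⟨hα0, hα1⟩,
    fun H _ _ _ P hadj hidem hortho _ a b hab => ?_⟩
  have hP : OrthogonalProjections P := ⟨⟨hidem, hortho⟩, hadj⟩
  have hgap (n : ℤ) (hn : (n : ℝ) ≠ 0) : 1 ≤ |(n : ℝ)| :=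
    mod_cast Int.one_le_abs (Int.cast_ne_zero.1 hn)
  obtain ⟨c, hc, hcb⟩ := fractional_power_commutator_bound_general ⟨hα0, hα1⟩ hP one_pos hgap
    (fun m n => by simpa using hab m n)
  exact ⟨c, hc, by simpa only [Real.one_rpow, mul_one] using hcb⟩
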